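/- Let k be a positive integer, h, w, wˡ ∈ ℂᵏ, and let a > 0 and aˡ > 0 be real numbers. Set b := |hᴴ w|², bˡ := |hᴴ wˡ|², and v := 2 Re[ conj(hᴴ wˡ) · (hᴴ w) ] − bˡ. Assume bˡ > 0 and v > 0. Then the achievable-rate expression satisfies the concave lower bound ln(1 + b/a) ≥ ln(1 + bˡ/aˡ) − ((bˡ)² / (aˡ (aˡ + bˡ))) · ( a/v − aˡ/bˡ ). -/

import Mathlib

/-!
The rate is `ln (1 + 1 / x)` at the inverse SINR `x = a / b`, a convex function of `x`, so it lies
above its tangent line at `aˡ / bˡ`. Since `|z|²` lies above its linearization `v`, the rate can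
only drop when `b` is replaced by `v`; the surrogate is the tangent line evaluated at `x = a / v`.
-/

open RCLike

/-- The slope of `x ↦ log (1 + x⁻¹)` at `y` is `-(y * (y + 1))⁻¹`. -/
theorem tangent_log_one_add_inv_le {x y : ℝ} (hx : 0 < x) (hy : 0 < y) :
    Real.log (1 + y⁻¹) - (x - y) / (y * (y + 1)) ≤ Real.log (1 + x⁻¹) := by
  have log_gap_le_ratio :
      Real.log (1 + y⁻¹) - Real.log (1 + x⁻¹) ≤ (1 + y⁻¹) / (1 + x⁻¹) - 1 := by
    rw [← Real.log_div (by positivity) (by positivity)]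
    exact Real.log_le_sub_one_of_pos (by positivity)
  have ratio_le_tangent : (1 + y⁻¹) / (1 + x⁻¹) - 1 ≤ (x - y) / (y * (y + 1)) := by
    have gap_eq : (x - y) / (y * (y + 1)) - ((1 + y⁻¹) / (1 + x⁻¹) - 1) =
        (x - y) ^ 2 / (y * (y + 1) * (x + 1)) := by
      field_simp
      ring
    exact sub_nonneg.mp (gap_eq ▸ by positivity)
  linarith

theorem tangent_log_one_add_div_le {a b p q : ℝ} (ha : 0 < a) (hb : 0 < b) (hp : 0 < p)
    (hq : 0 < q) :
    Real.log (1 + q / p) - q ^ 2 / (p * (p + q)) * (a / b - p / q) ≤ Real.log (1 + b / a) := by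
  have slope_eq : (a / b - p / q) / (p / q * (p / q + 1)) =
      q ^ 2 / (p * (p + q)) * (a / b - p / q) := by
    field_simp
  simpa only [inv_div, slope_eq] using
    tangent_log_one_add_inv_le (div_pos ha hb) (div_pos hp hq)

section InnerProductSpace

variable {𝕜 E : Type*} [RCLike 𝕜] [SeminormedAddCommGroup E] [InnerProductSpace 𝕜 E]

theorem two_mul_re_inner_sub_norm_sq_le (x y : E) :
    2 * re (inner 𝕜 x y) - ‖x‖ ^ 2 ≤ ‖y‖ ^ 2 := by
  linarith [norm_sub_sq (𝕜 := 𝕜) x y, sq_nonneg ‖x - y‖]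

theorem norm_pos_of_re_inner_pos {x y : E} (h : 0 < re (inner 𝕜 x y)) : 0 < ‖x‖ :=
  pos_of_mul_pos_left (h.trans_le (re_inner_le_norm x y)) (norm_nonneg y)

theorem stmt_3_general (zl z : E) {a al v : ℝ} (ha : 0 < a) (hal : 0 < al)
    (hv : v = 2 * re (inner 𝕜 zl z) - ‖zl‖ ^ 2) (hv_pos : 0 < v) :
    Real.log (1 + ‖zl‖ ^ 2 / al) -
        (‖zl‖ ^ 2) ^ 2 / (al * (al + ‖zl‖ ^ 2)) * (a / v - al / ‖zl‖ ^ 2) ≤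
      Real.log (1 + ‖z‖ ^ 2 / a) := by
  have hzl : 0 < ‖zl‖ := norm_pos_of_re_inner_pos (𝕜 := 𝕜) (y := z) (by linarith [sq_nonneg ‖zl‖])
  have hvz : v ≤ ‖z‖ ^ 2 := hv ▸ two_mul_re_inner_sub_norm_sq_le zl z
  calc
    _ ≤ Real.log (1 + v / a) := tangent_log_one_add_div_le ha hv_pos hal (pow_pos hzl 2)
    _ ≤ Real.log (1 + ‖z‖ ^ 2 / a) := by gcongr

end InnerProductSpace

/-- Inner approximation of the achievable rate `ln(1 + b/a)` (paper, Lemma 2):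
with `b = |hᴴw|²`, `bˡ = |hᴴwˡ|²` and the linearization
`v = 2 Re[conj(hᴴwˡ)(hᴴw)] − bˡ > 0`, the rate is lower bounded by the
concave surrogate. -/
theorem stmt_3 (k : ℕ) (hk : 0 < k) (h w wl : Fin k → ℂ) (a al : ℝ)
    (ha : 0 < a) (hal : 0 < al) (b bl v : ℝ)
    (hb : b = Complex.normSq (∑ i, star (h i) * w i))
    (hbl : bl = Complex.normSq (∑ i, star (h i) * wl i))
    (hv : v = 2 * ((starRingEnd ℂ) (∑ i, star (h i) * wl i) * (∑ i, star (h i) * w i)).re - bl)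
    (hblpos : 0 < bl) (hvpos : 0 < v) :
    Real.log (1 + b / a) ≥
      Real.log (1 + bl / al) - (bl ^ 2 / (al * (al + bl))) * (a / v - al / bl) := by
  rw [Complex.normSq_eq_norm_sq] at hb hbl
  subst hb hbl
  exact stmt_3_general (𝕜 := ℂ) (∑ i, star (h i) * wl i) (∑ i, star (h i) * w i) ha hal
    (by simpa only [inner_apply', re_eq_complex_re] using hv) hvpos
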